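/- arXiv:2006.10568 — 2 statements merged into one kernel-verified Lean document; each statement's English description precedes it below -/
import Mathlib

section
/- Assume p(A) is a compact operator. Then: (i) every point μ of the spectrum of A with μ ∉ {ω₁,…,ω_L} is an eigenvalue of A whose eigenspace ker(A − μ) is finite-dimensional; and (ii) for every δ > 0, the set {μ ∈ spectrum(A) : |μ − ω_ι| ≥ δ for all ι = 1,…,L} is finite. In particular, the points ω₁,…,ω_L are the only possible accumulation points of the spectrum of A. -/
/-! For every scalar `μ` one has `p(T) = Q (T - μ) + p(μ)` with `Q` a polynomial in `T`. On the
other hand, by Riesz's lemma, a compact operator cannot act on the successive quotients of an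
infinite strictly monotone chain of closed subspaces through scalars bounded away from `0`.

Let `p(μ) ≠ 0`. If `T - μ` is injective, compactness of `p(T)` makes it bounded below, so the ranges
of `(T - μ) ^ n` are closed; `p(T)` acts on their successive quotients as `p(μ)`, hence the chain
stabilizes and `T - μ` is surjective. Infinitely many spectral points with `ε ≤ |p(μ)|` would thus
all be eigenvalues, and `p(T)` would act on the successive quotients of the increasing spans of
their eigenvectors through the scalars `p(μ)`.
-/

open Filter Function Module.End Polynomial Set Topology

theorem exists_ne_dist_lt_of_totallyBounded {α ι : Type*} [PseudoMetricSpace α] [Infinite ι]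
    {s : Set α} (hs : TotallyBounded s) {u : ι → α} (hu : ∀ i, u i ∈ s) {ε : ℝ} (hε : 0 < ε) :
    ∃ i j, i ≠ j ∧ dist (u i) (u j) < ε := by
  obtain ⟨t, ht, hst⟩ := Metric.totallyBounded_iff.1 hs (ε / 2) (half_pos hε)
  have hcover : ∀ i, ∃ y : t, dist (u i) y < ε / 2 := by
    simpa using fun i => mem_iUnion₂.1 (hst (hu i))
  choose center hcenter using hcover
  have := ht.to_subtype
  obtain ⟨i, j, hij, hc⟩ := Finite.exists_ne_map_eq_of_infinite center
  exact ⟨i, j, hij, dist_triangle_right (u i) (u j) (center i) |>.trans_lt <| by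
    linarith [hcenter i, hc ▸ hcenter j]⟩

theorem range_pow_succ_lt_range_pow {R M : Type*} [Semiring R] [AddCommMonoid M] [Module R M]
    {f : M →ₗ[R] M} (hinj : Injective f) (hsurj : ¬ Surjective f) (n : ℕ) :
    (f ^ (n + 1)).range < (f ^ n).range := by
  obtain ⟨z, hz⟩ := not_forall.1 hsurj
  refine SetLike.lt_iff_le_and_exists.2
    ⟨f.iterateRange.monotone n.le_succ, (f ^ n) z, ⟨z, rfl⟩, ?_⟩
  rintro ⟨y, hy⟩
  rw [pow_succ] at hy
  exact hz ⟨y, iterate_injective hinj n hy⟩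

section NormedSpace

variable {𝕜 E F : Type*} [NontriviallyNormedField 𝕜] [NormedAddCommGroup E] [NormedSpace 𝕜 E]
  [NormedAddCommGroup F] [NormedSpace 𝕜 F]

theorem riesz_lemma_of_lt {c : 𝕜} (hc : 1 < ‖c‖) {R : ℝ} (hR : ‖c‖ < R) {W V : Submodule 𝕜 E}
    (hW : IsClosed (W : Set E)) (hWV : W < V) :
    ∃ x ∈ V, ‖x‖ ≤ R ∧ ∀ y ∈ W, 1 ≤ ‖x - y‖ := by
  obtain ⟨z, hzV, hzW⟩ := SetLike.exists_of_lt hWV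
  obtain ⟨x, hxR, hx⟩ := riesz_lemma_of_norm_lt (F := W.comap V.subtype) hc hR
    (hW.preimage continuous_subtype_val) ⟨⟨z, hzV⟩, hzW⟩
  exact ⟨x, x.2, hxR, fun y hy => hx ⟨y, hWV.le hy⟩ hy⟩

/-- The operator `K` acts on the quotient `V i / W i` as the scalar `c i`. -/
theorem exists_norm_lt_of_pairwise_mapsTo {K : E →L[𝕜] E} (hK : IsCompactOperator K)
    {ι : Type*} [Infinite ι] {V W : ι → Submodule 𝕜 E} (hW : ∀ i, IsClosed (W i : Set E))
    (hWV : ∀ i, W i < V i) {c : ι → 𝕜} (hc : ∀ i, ∀ x ∈ V i, K x - c i • x ∈ W i)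
    (hVW : Pairwise fun i j => MapsTo K (V i) (W j) ∨ MapsTo K (V j) (W i))
    {ε : ℝ} (hε : 0 < ε) : ∃ i, ‖c i‖ < ε := by
  by_contra! hεc
  obtain ⟨a, ha⟩ := NormedField.exists_one_lt_norm 𝕜
  choose x hxV hxa hxW using fun i => riesz_lemma_of_lt ha (lt_add_one ‖a‖) (hW i) (hWV i)
  have hsep : ∀ i, ∀ y ∈ W i, ε ≤ dist (K (x i)) y := by
    intro i y hy
    have hci : c i ≠ 0 := norm_pos_iff.1 (hε.trans_le (hεc i))
    have hmem : (c i)⁻¹ • (y - (K (x i) - c i • x i)) ∈ W i :=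
      (W i).smul_mem _ ((W i).sub_mem hy (hc i _ (hxV i)))
    calc ε ≤ ‖c i‖ * 1 := by simpa using hεc i
      _ ≤ ‖c i‖ * ‖x i - (c i)⁻¹ • (y - (K (x i) - c i • x i))‖ := by
        gcongr
        exact hxW i _ hmem
      _ = dist (K (x i)) y := by
        rw [← norm_smul, smul_sub, smul_inv_smul₀ hci, dist_eq_norm]
        congr 1
        abel
  obtain ⟨C, hC, hKC⟩ := IsCompactOperator.image_closedBall_subset_compact
    (f := (K : E →ₗ[𝕜] E)) hK (‖a‖ + 1)
  obtain ⟨i, j, hij, hlt⟩ := exists_ne_dist_lt_of_totallyBounded hC.totallyBounded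
    (u := fun i => K (x i)) (fun i => hKC ⟨x i, by simpa using hxa i, rfl⟩) hε
  rcases hVW hij with h | h
  · exact hlt.not_ge (dist_comm (K (x i)) _ ▸ hsep j _ (h (hxV i)))
  · exact hlt.not_ge (hsep i _ (h (hxV j)))

theorem exists_norm_eigenvalue_lt_of_linearIndependent [CompleteSpace 𝕜] {K : E →L[𝕜] E}
    (hK : IsCompactOperator K) {v : ℕ → E} (hv : LinearIndependent 𝕜 v) {c : ℕ → 𝕜}
    (hc : ∀ n, K (v n) = c n • v n) {ε : ℝ} (hε : 0 < ε) : ∃ n, ‖c n‖ < ε := by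
  let F : ℕ → Submodule 𝕜 E := fun n => Submodule.span 𝕜 (v '' Iio n)
  have hF : Monotone F := fun m n hmn => by
    dsimp only [F]; gcongr
  have hvF : ∀ n, v n ∈ F (n + 1) := fun n => Submodule.subset_span ⟨n, Nat.lt_succ_self n, rfl⟩
  have hmaps : ∀ n, MapsTo K (F n) (F n) := by
    intro n
    suffices F n ≤ (F n).comap (K : E →ₗ[𝕜] E) from this
    refine Submodule.span_le.2 ?_
    rintro _ ⟨i, hi, rfl⟩
    simpa [hc] using (F n).smul_mem (c i) (Submodule.subset_span ⟨i, hi, rfl⟩)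
  have hsub : ∀ n, ∀ x ∈ F (n + 1), K x - c n • x ∈ F n := by
    intro n
    suffices F (n + 1) ≤ (F n).comap (K - c n • 1 : E →L[𝕜] E).toLinearMap from this
    refine Submodule.span_le.2 ?_
    rintro _ ⟨i, hi, rfl⟩
    rcases (Nat.lt_succ_iff.1 hi).lt_or_eq with hin | rfl
    · simpa [hc, ← sub_smul] using (F n).smul_mem (c i - c n) (Submodule.subset_span ⟨i, hin, rfl⟩)
    · simp [hc]
  have hlt : ∀ n, F n < F (n + 1) := fun n =>
    SetLike.lt_iff_le_and_exists.2 ⟨hF n.le_succ, v n, hvF n, hv.notMem_span_image (by simp)⟩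
  have hclosed : ∀ n, IsClosed (F n : Set E) := fun n =>
    have := FiniteDimensional.span_of_finite 𝕜 ((finite_Iio n).image v)
    (F n).closed_of_finiteDimensional
  refine exists_norm_lt_of_pairwise_mapsTo hK hclosed hlt hsub (fun m n hmn => ?_) hε
  rcases hmn.lt_or_gt with h | h
  · exact .inl ((hmaps (m + 1)).mono_right (hF h))
  · exact .inr ((hmaps (n + 1)).mono_right (hF h))

theorem finiteDimensional_eigenspace_of_isCompactOperator [CompleteSpace 𝕜] {K : E →L[𝕜] E}
    (hK : IsCompactOperator K) {c : 𝕜} (hc : c ≠ 0) :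
    FiniteDimensional 𝕜 (eigenspace (K : E →ₗ[𝕜] E) c) := by
  have hclosed : IsClosed (eigenspace (K : E →ₗ[𝕜] E) c : Set E) := by
    simpa [eigenspace_def] using (K - c • (1 : E →L[𝕜] E)).isClosed_ker
  have hres := IsCompactOperator.restrict (f := (K : E →ₗ[𝕜] E)) hK
    ((mem_invtSubmodule_iff_forall_mem_of_mem _).1 (eigenspace_mem_invtSubmodule _ c)) hclosed
  rw [restrict_eigenspace, LinearMap.coe_smul, IsCompactOperator.smul_iff₀ hc] at hres
  exact .of_isCompactOperator_id hres

theorem exists_seq_tendsto_zero_of_not_antilipschitz {S : E →L[𝕜] F}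
    (hS : ¬ ∃ C, AntilipschitzWith C S) :
    ∃ (r : ℝ) (x : ℕ → E), 0 < r ∧ (∀ n, ‖x n‖ ≤ 1) ∧ (∀ n, r ≤ ‖x n‖) ∧
      Tendsto (S ∘ x) atTop (𝓝 0) := by
  rw [antilipschitzWith_iff_exists_mul_le_norm] at hS
  push Not at hS
  obtain ⟨a, ha⟩ := NormedField.exists_one_lt_norm 𝕜
  have hshell : ∀ n : ℕ, ∃ x : E, ‖x‖ ≤ 1 ∧ ‖a‖⁻¹ ≤ ‖x‖ ∧ ‖S x‖ ≤ 1 / ((n : ℝ) + 1) := by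
    intro n
    obtain ⟨x, hx⟩ := hS (1 / ((n : ℝ) + 1)) (by positivity)
    have hx0 : x ≠ 0 := by rintro rfl; simp at hx
    obtain ⟨d, -, hd1, hda, -⟩ := rescale_to_shell ha one_pos hx0
    refine ⟨d • x, hd1.le, by simpa using hda, ?_⟩
    calc ‖S (d • x)‖ = ‖d‖ * ‖S x‖ := by rw [map_smul, norm_smul]
      _ ≤ ‖d‖ * (1 / ((n : ℝ) + 1) * ‖x‖) := by gcongr
      _ = 1 / ((n : ℝ) + 1) * ‖d • x‖ := by rw [norm_smul]; ring
      _ ≤ 1 / ((n : ℝ) + 1) := mul_le_of_le_one_right (by positivity) hd1.le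
  choose x hx1 hxa hSx using hshell
  exact ⟨‖a‖⁻¹, x, inv_pos.2 (one_pos.trans ha), hx1, hxa,
    squeeze_zero_norm hSx tendsto_one_div_add_atTop_nhds_zero_nat⟩

theorem antilipschitz_of_isCompactOperator_mul_add {K Q S : E →L[𝕜] E} (hK : IsCompactOperator K)
    {c : 𝕜} (hc : c ≠ 0) (hQS : K = Q * S + c • 1) (hS : Injective S) :
    ∃ C, AntilipschitzWith C S := by
  by_contra hanti
  obtain ⟨r, x, hr, hx1, hxr, hSx⟩ := exists_seq_tendsto_zero_of_not_antilipschitz hanti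
  obtain ⟨B, hB, hKB⟩ := IsCompactOperator.image_closedBall_subset_compact
    (f := (K : E →ₗ[𝕜] E)) hK 1
  obtain ⟨y, -, φ, hφ, hy⟩ := hB.tendsto_subseq fun n => hKB ⟨x n, by simpa using hx1 n, rfl⟩
  have hSφ : Tendsto (S ∘ x ∘ φ) atTop (𝓝 0) := hSx.comp hφ.tendsto_atTop
  have hxφ : Tendsto (x ∘ φ) atTop (𝓝 (c⁻¹ • (y - Q 0))) := by
    refine ((hy.sub ((Q.continuous.tendsto 0).comp hSφ)).const_smul c⁻¹).congr fun n => ?_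
    simp [hQS, inv_smul_smul₀ hc]
  have hlim : S (c⁻¹ • (y - Q 0)) = S 0 :=
    (tendsto_nhds_unique ((S.continuous.tendsto _).comp hxφ) hSφ).trans (map_zero S).symm
  have hle : r ≤ ‖c⁻¹ • (y - Q 0)‖ := ge_of_tendsto' hxφ.norm fun n => hxr (φ n)
  rw [hS hlim, norm_zero] at hle
  exact hle.not_gt hr

theorem isClosed_range_pow_of_antilipschitz [CompleteSpace E] {S : E →L[𝕜] E} {C : NNReal}
    (hS : AntilipschitzWith C S) (n : ℕ) :
    IsClosed ((S.toLinearMap ^ n).range : Set E) := by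
  induction n with
  | zero => simp [Module.End.one_eq_id]
  | succ n ih =>
    rw [Module.End.iterate_succ', LinearMap.range_comp]
    exact (hS.isClosedEmbedding S.uniformContinuous).isClosedMap _ ih

theorem surjective_of_isCompactOperator_mul_add [CompleteSpace E] {K Q S : E →L[𝕜] E}
    (hK : IsCompactOperator K) {c : 𝕜} (hc : c ≠ 0) (hcomm : Commute Q S)
    (hQS : K = Q * S + c • 1) (hS : Injective S) : Surjective S := by
  by_contra hsurj
  obtain ⟨C, hC⟩ := antilipschitz_of_isCompactOperator_mul_add hK hc hQS hS
  let V : ℕ → Submodule 𝕜 E := fun n => (S.toLinearMap ^ n).range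
  have hV : Antitone V := S.toLinearMap.iterateRange.monotone
  have hcancel : K - c • 1 = Q * S := by rw [hQS, add_sub_cancel_right]
  have hsub : ∀ n, ∀ x ∈ V n, K x - c • x ∈ V (n + 1) := by
    rintro n _ ⟨x, rfl⟩
    have hQSn : Commute Q.toLinearMap (S.toLinearMap ^ (n + 1)) :=
      (hcomm.map ContinuousLinearMap.toLinearMapRingHom).pow_right (n + 1)
    refine ⟨Q x, ?_⟩
    calc (S.toLinearMap ^ (n + 1)) (Q x) = Q ((S.toLinearMap ^ (n + 1)) x) :=
          (DFunLike.congr_fun hQSn.eq x).symm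
      _ = Q (S ((S.toLinearMap ^ n) x)) := by rw [pow_succ']; rfl
      _ = K ((S.toLinearMap ^ n) x) - c • (S.toLinearMap ^ n) x :=
          (DFunLike.congr_fun hcancel _).symm
  have hKV : ∀ n, MapsTo K (V n) (V n) := fun n x hx => by
    simpa using (V n).add_mem (hV n.le_succ (hsub n x hx)) ((V n).smul_mem c hx)
  obtain ⟨-, hlt_self⟩ := exists_norm_lt_of_pairwise_mapsTo hK
    (fun n => isClosed_range_pow_of_antilipschitz hC (n + 1))
    (range_pow_succ_lt_range_pow hS hsurj) hsub
    (fun m n hmn => hmn.lt_or_gt.symm.imp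
      (fun h => (hKV m).mono_right (hV h)) (fun h => (hKV n).mono_right (hV h)))
    (norm_pos_iff.2 hc)
  exact lt_irrefl _ hlt_self

end NormedSpace

section Polynomial

variable {R A : Type*} [CommRing R] [Ring A] [Algebra R A]

theorem exists_aeval_eq_mul_add (a : A) (p : R[X]) (μ : R) :
    ∃ q, Commute q (a - algebraMap R A μ) ∧
      aeval a p = q * (a - algebraMap R A μ) + p.eval μ • 1 := by
  obtain ⟨q, hq⟩ := X_sub_C_dvd_sub_C_eval (p := p) (a := μ)
  have hS : aeval a (X - C μ) = a - algebraMap R A μ := by simp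
  refine ⟨aeval a q, hS ▸ (Commute.all q (X - C μ)).map (aeval a), ?_⟩
  rw [← hS, ← map_mul, mul_comm, ← hq]
  simp [Algebra.algebraMap_eq_smul_one]

theorem aeval_prod_X_sub_C_eq_prod_ofFn {n : ℕ} (ω : Fin n → R) (a : A) :
    aeval a (∏ i, (X - C (ω i))) = (List.ofFn fun i => a - ω i • 1).prod := by
  simp [← List.prod_ofFn, map_list_prod, List.map_ofFn, Function.comp_def,
    Algebra.algebraMap_eq_smul_one]

end Polynomial

section PolynomiallyCompact

variable {𝕜 E : Type*} [NontriviallyNormedField 𝕜] [NormedAddCommGroup E] [NormedSpace 𝕜 E]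
  {T : E →L[𝕜] E} {p : 𝕜[X]}

variable (T p) in
theorem eigenspace_le_eigenspace_aeval (μ : 𝕜) :
    eigenspace (T : E →ₗ[𝕜] E) μ ≤ eigenspace (aeval T p : E →L[𝕜] E).toLinearMap (p.eval μ) := by
  intro x hx
  have hTx : T x = μ • x := mem_eigenspace_iff.1 hx
  obtain ⟨Q, -, hQ⟩ := exists_aeval_eq_mul_add T p μ
  simp [hQ, hTx, Algebra.algebraMap_eq_smul_one]

theorem hasEigenvalue_of_mem_spectrum_of_isCompactOperator_aeval [CompleteSpace E]
    (hT : IsCompactOperator (aeval T p : E →L[𝕜] E)) {μ : 𝕜} (hμ : μ ∈ spectrum 𝕜 T)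
    (hpμ : p.eval μ ≠ 0) : HasEigenvalue (T : E →ₗ[𝕜] E) μ := by
  obtain ⟨Q, hcomm, hQ⟩ := exists_aeval_eq_mul_add T p μ
  contrapose! hμ
  have hinj : Injective (T - algebraMap 𝕜 (E →L[𝕜] E) μ) := by
    rw [hasEigenvalue_iff, not_not, eigenspace_def] at hμ
    exact LinearMap.ker_eq_bot.1 hμ
  have hsurj := surjective_of_isCompactOperator_mul_add hT hpμ hcomm hQ hinj
  rw [spectrum.notMem_iff, IsUnit.sub_iff]
  exact ContinuousLinearMap.isUnit_iff_bijective.2 ⟨hinj, hsurj⟩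

theorem finiteDimensional_eigenspace_of_isCompactOperator_aeval [CompleteSpace 𝕜]
    (hT : IsCompactOperator (aeval T p : E →L[𝕜] E)) {μ : 𝕜} (hpμ : p.eval μ ≠ 0) :
    FiniteDimensional 𝕜 (eigenspace (T : E →ₗ[𝕜] E) μ) :=
  have := finiteDimensional_eigenspace_of_isCompactOperator hT hpμ
  Submodule.finiteDimensional_of_le (eigenspace_le_eigenspace_aeval T p μ)

theorem finite_spectrum_le_norm_eval [CompleteSpace 𝕜] [CompleteSpace E]
    (hT : IsCompactOperator (aeval T p : E →L[𝕜] E)) {ε : ℝ} (hε : 0 < ε) :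
    {μ ∈ spectrum 𝕜 T | ε ≤ ‖p.eval μ‖}.Finite := by
  by_contra hinf
  let μ := Set.Infinite.natEmbedding _ hinf
  have heigen : ∀ n, HasEigenvalue (T : E →ₗ[𝕜] E) (μ n) := fun n =>
    hasEigenvalue_of_mem_spectrum_of_isCompactOperator_aeval hT (μ n).2.1
      (norm_pos_iff.1 (hε.trans_le (μ n).2.2))
  choose v hv using fun n => (heigen n).exists_hasEigenvector
  have hindep : LinearIndependent 𝕜 v :=
    eigenvectors_linearIndependent' _ _ (Subtype.val_injective.comp μ.injective) v hv
  obtain ⟨n, hn⟩ := exists_norm_eigenvalue_lt_of_linearIndependent hT hindep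
    (fun n => mem_eigenspace_iff.1 (eigenspace_le_eigenspace_aeval T p _ (hv n).1)) hε
  exact hn.not_ge (μ n).2.2

theorem spectrum_of_polynomially_compact_general [CompleteSpace 𝕜] [CompleteSpace E]
    {ι : Type*} [Fintype ι] (ω : ι → 𝕜)
    (hT : IsCompactOperator (aeval T (∏ i, (X - C (ω i))) : E →L[𝕜] E)) :
    (∀ μ ∈ spectrum 𝕜 T, (∀ i, μ ≠ ω i) →
      HasEigenvalue (T : E →ₗ[𝕜] E) μ ∧ FiniteDimensional 𝕜 (eigenspace (T : E →ₗ[𝕜] E) μ)) ∧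
    ∀ δ : ℝ, 0 < δ → {μ ∈ spectrum 𝕜 T | ∀ i, δ ≤ ‖μ - ω i‖}.Finite := by
  have heval : ∀ μ, (∏ i, (X - C (ω i))).eval μ = ∏ i, (μ - ω i) := fun μ => by simp [eval_prod]
  refine ⟨fun μ hμ hne => ?_, fun δ hδ => ?_⟩
  · have hpμ : (∏ i, (X - C (ω i))).eval μ ≠ 0 :=
      heval μ ▸ Finset.prod_ne_zero_iff.2 fun i _ => sub_ne_zero.2 (hne i)
    exact ⟨hasEigenvalue_of_mem_spectrum_of_isCompactOperator_aeval hT hμ hpμ,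
      finiteDimensional_eigenspace_of_isCompactOperator_aeval hT hpμ⟩
  · refine (finite_spectrum_le_norm_eval hT (pow_pos hδ (Fintype.card ι))).subset ?_
    rintro μ ⟨hμ, hdist⟩
    have hle : δ ^ Fintype.card ι ≤ ‖(∏ i, (X - C (ω i))).eval μ‖ := by
      rw [heval, norm_prod, ← Finset.card_univ, ← Finset.prod_const]
      exact Finset.prod_le_prod (fun _ _ => hδ.le) fun i _ => hdist i
    exact ⟨hμ, hle⟩

end PolynomiallyCompact

/-- If `p(A)` is compact, then every spectral point of `A` away from the zeros `ω_ι` of `p`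
is an eigenvalue with finite-dimensional eigenspace, and outside any `δ`-neighborhood of
the `ω_ι` the spectrum of `A` is finite. -/
theorem spectrum_of_polynomially_compact
    {H : Type*} [NormedAddCommGroup H] [InnerProductSpace ℂ H] [CompleteSpace H]
    {L : ℕ} (hL : 0 < L) (ω : Fin L → ℝ) (hω : StrictMono ω)
    (A : H →L[ℂ] H) (hA : IsSelfAdjoint A)
    (pA : H →L[ℂ] H)
    (hpA : pA = (List.ofFn fun ι : Fin L => A - (ω ι : ℂ) • 1).prod)
    (hcpt : IsCompactOperator pA) :
    (∀ μ : ℂ, μ ∈ spectrum ℂ A → (∀ ι : Fin L, μ ≠ (ω ι : ℂ)) →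
      Module.End.HasEigenvalue (A : H →ₗ[ℂ] H) μ ∧
        FiniteDimensional ℂ (Module.End.eigenspace (A : H →ₗ[ℂ] H) μ)) ∧
    (∀ δ : ℝ, 0 < δ →
      {μ ∈ spectrum ℂ A | ∀ ι : Fin L, δ ≤ ‖μ - (ω ι : ℂ)‖}.Finite) :=
  spectrum_of_polynomially_compact_general (fun ι => (ω ι : ℂ)) <| by
    rwa [aeval_prod_X_sub_C_eq_prod_ofFn, ← hpA]
end

section
/- For ξ ∈ ℝ²∖{0} define q(ξ) := (2μ|ξ|)^(−1/2)·(I₃ − (1 − √(1−m))·D(ξ)), z(ξ) := (2μ|ξ|)^(1/2)·(I₃ + ((1−m)^(−1/2) − 1)·D(ξ)), s(ξ) := (1/(2μ|ξ|))·(m·D(ξ) − I₃), and r(ξ) := 2μ|ξ|·(−((λ+μ)/(λ+3μ))·D(ξ) − I₃). Then (noting that 0 < 1 − m) q(ξ) is symmetric positive definite and the identities q(ξ)² = −s(ξ), q(ξ)·z(ξ) = I₃ and z(ξ)² = −r(ξ) hold. (Principal symbols of the square roots (−S)^(1/2) and (−S)^(−1/2) of the elastic single layer potential.) -/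
/-!
`D(ξ)` is an orthogonal projection, being the sum of the projections onto the perpendicular lines
spanned by `(ξ, 0)` and `e₃`. For an idempotent `P`, the elements `κ • (1 - P + b • P)` multiply
like the pairs `(κ, b)`. With `κ = 2μ|ξ|` and `c = 1 - m`, the symbols `q`, `z`, `-s`, `-r` are
the elements given by `(κ^{-1/2}, c^{1/2})`, `(κ^{1/2}, c^{-1/2})`, `(κ⁻¹, c)`, `(κ, c⁻¹)`. For
`b > 0` and `P` an orthogonal projection, `1 - P + b • P` is nonnegative and invertible, hence
positive definite.
-/

/-- The block-diagonal matrix `D(ξ) = diag(Λ(ξ), 1)`, `Λ(ξ)_{ij} = ξ_i ξ_j / |ξ|²`. -/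
noncomputable def dMat (ξ : Fin 2 → ℝ) : Matrix (Fin 3) (Fin 3) ℝ :=
  Matrix.of fun p q =>
    (![ξ 0, ξ 1, 0] p * ![ξ 0, ξ 1, 0] q) / (ξ 0 ^ 2 + ξ 1 ^ 2) +
      (if p = 2 ∧ q = 2 then 1 else 0)

section ScaleRange

variable {R A : Type*} [CommSemiring R] [Ring A] [Algebra R A]

/-- For an idempotent `P`, the element that acts as the scalar `b` on the range of `P` and as the
identity on its kernel. The definition makes sense for every `P`, but only for idempotent `P` is it
multiplicative in `b`. -/
def scaleRange (P : A) (b : R) : A := 1 - P + b • P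

@[simp]
theorem scaleRange_one (P : A) : scaleRange P (1 : R) = 1 := by
  simp [scaleRange]

theorem scaleRange_mul_scaleRange {P : A} (hP : IsIdempotentElem P) (a b : R) :
    scaleRange P a * scaleRange P b = scaleRange P (a * b) := by
  simp only [scaleRange, add_mul, mul_add, smul_mul_assoc, mul_smul_comm, hP.eq,
    hP.one_sub.eq, hP.mul_one_sub_self, hP.one_sub_mul_self,
    smul_zero, add_zero, zero_add, smul_smul, mul_comm]

theorem smul_scaleRange_mul_smul_scaleRange {P : A} (hP : IsIdempotentElem P) (x a y b : R) :
    (x • scaleRange P a) * (y • scaleRange P b) = (x * y) • scaleRange P (a * b) := by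
  rw [smul_mul_smul_comm, scaleRange_mul_scaleRange hP]

theorem isUnit_scaleRange {P : A} (hP : IsIdempotentElem P) {b : R} (hb : IsUnit b) :
    IsUnit (scaleRange P b) := by
  obtain ⟨u, rfl⟩ := hb
  refine isUnit_iff_exists.mpr ⟨scaleRange P (↑u⁻¹ : R), ?_, ?_⟩ <;>
    simp [scaleRange_mul_scaleRange hP]

end ScaleRange

theorem isStrictlyPositive_scaleRange {F A : Type*} [Semifield F] [PartialOrder F] [Ring A]
    [PartialOrder A] [StarRing A] [StarOrderedRing A] [Algebra F A] [PosSMulMono F A] {P : A}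
    (hP : IsStarProjection P) {b : F} (hb : 0 < b) : IsStrictlyPositive (scaleRange P b) :=
  (isUnit_scaleRange hP.isIdempotentElem hb.ne'.isUnit).isStrictlyPositive
    (add_nonneg hP.one_sub_nonneg (smul_nonneg hb.le hP.nonneg))

open scoped MatrixOrder ComplexOrder in
theorem posDef_scaleRange {n 𝕜 : Type*} [Fintype n] [DecidableEq n] [RCLike 𝕜] {P : Matrix n n 𝕜}
    (hP : IsStarProjection P) {b : ℝ} (hb : 0 < b) : (scaleRange P b).PosDef :=
  Matrix.isStrictlyPositive_iff_posDef.mp (isStrictlyPositive_scaleRange hP hb)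

section LineProj

open Matrix

variable {n F : Type*} [Fintype n] [Semifield F] [StarRing F]

/-- The matrix `v v* / (v* v)` of the orthogonal projection onto the line spanned by `v`. It is `0`
when `v* v = 0`, so it is a star projection for every `v`. -/
def lineProj (v : n → F) : Matrix n n F := (star v ⬝ᵥ v)⁻¹ • vecMulVec v (star v)

theorem isStarProjection_lineProj (v : n → F) : IsStarProjection (lineProj v) where
  isIdempotentElem := by
    have hinv : (star v ⬝ᵥ v)⁻¹ * (star v ⬝ᵥ v)⁻¹ * (star v ⬝ᵥ v) = (star v ⬝ᵥ v)⁻¹ := by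
      simpa only [inv_inv] using mul_self_mul_inv (star v ⬝ᵥ v)⁻¹
    rw [IsIdempotentElem, lineProj, smul_mul_smul_comm, vecMulVec_mul_vecMulVec, vecMulVec_smul,
      smul_smul, hinv]
  isSelfAdjoint := by
    rw [IsSelfAdjoint, star_eq_conjTranspose, lineProj, conjTranspose_smul, conjTranspose_vecMulVec,
      star_star, star_inv₀, ← star_dotProduct]

theorem lineProj_mul_lineProj_of_star_dotProduct_eq_zero {v w : n → F} (h : star v ⬝ᵥ w = 0) :
    lineProj v * lineProj w = 0 := by
  simp [lineProj, vecMulVec_mul_vecMulVec, h]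

end LineProj

theorem dMat_eq_lineProj_add_lineProj (ξ : Fin 2 → ℝ) :
    dMat ξ = lineProj ![ξ 0, ξ 1, 0] + lineProj ![0, 0, 1] := by
  ext i j
  fin_cases i <;> fin_cases j <;>
    simp [dMat, lineProj, Matrix.vecMulVec, dotProduct, Fin.sum_univ_three, sq, div_eq_inv_mul]

theorem isStarProjection_dMat (ξ : Fin 2 → ℝ) : IsStarProjection (dMat ξ) := by
  rw [dMat_eq_lineProj_add_lineProj]
  refine (isStarProjection_lineProj _).add (isStarProjection_lineProj _)
    (lineProj_mul_lineProj_of_star_dotProduct_eq_zero ?_)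
  simp [dotProduct, Fin.sum_univ_three]

theorem sq_add_sq_pos_of_ne_zero {ξ : Fin 2 → ℝ} (hξ : ξ ≠ 0) : 0 < ξ 0 ^ 2 + ξ 1 ^ 2 := by
  simpa [dotProduct, sq] using Matrix.dotProduct_star_self_pos_iff.mpr hξ

section Lame

variable {F : Type*} [Field F] [NeZero (2 : F)] {lam mu : F}

theorem one_sub_lame_ratio (h : lam + 2 * mu ≠ 0) :
    1 - (lam + mu) / (2 * (lam + 2 * mu)) = (lam + 3 * mu) / (2 * (lam + 2 * mu)) := by
  rw [one_sub_div (mul_ne_zero two_ne_zero h)]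
  ring

theorem inv_one_sub_lame_ratio (h₂ : lam + 2 * mu ≠ 0) (h₃ : lam + 3 * mu ≠ 0) :
    (1 - (lam + mu) / (2 * (lam + 2 * mu)))⁻¹ = 1 + (lam + mu) / (lam + 3 * mu) := by
  rw [one_sub_lame_ratio h₂, inv_div, one_add_div h₃]
  ring

end Lame

/-- Principal symbols of the square roots `(−S)^{1/2}` and `(−S)^{−1/2}` of the elastic
single layer potential: with `m = (λ+μ)/(2(λ+2μ))` (so `0 < 1 − m`),
`q(ξ) = (2μ|ξ|)^{-1/2}(I₃ − (1 − √(1−m))D(ξ))` is positive definite,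
`q(ξ)² = −s(ξ)`, `q(ξ)z(ξ) = I₃` and `z(ξ)² = −r(ξ)`. -/
theorem sqrt_symbols_of_single_layer
    (lam mu : ℝ) (hmu : 0 < mu) (hlam2mu : 0 < lam + 2 * mu)
    (m : ℝ) (hm : m = (lam + mu) / (2 * (lam + 2 * mu)))
    (ξ : Fin 2 → ℝ) (hξ : ξ ≠ 0)
    (q z s r : Matrix (Fin 3) (Fin 3) ℝ)
    (hq : q = (Real.sqrt (2 * mu * Real.sqrt (ξ 0 ^ 2 + ξ 1 ^ 2)))⁻¹ •
      ((1 : Matrix (Fin 3) (Fin 3) ℝ) - (1 - Real.sqrt (1 - m)) • dMat ξ))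
    (hz : z = Real.sqrt (2 * mu * Real.sqrt (ξ 0 ^ 2 + ξ 1 ^ 2)) •
      ((1 : Matrix (Fin 3) (Fin 3) ℝ) + ((Real.sqrt (1 - m))⁻¹ - 1) • dMat ξ))
    (hs : s = (1 / (2 * mu * Real.sqrt (ξ 0 ^ 2 + ξ 1 ^ 2))) •
      (m • dMat ξ - 1))
    (hr : r = (2 * mu * Real.sqrt (ξ 0 ^ 2 + ξ 1 ^ 2)) •
      (-((lam + mu) / (lam + 3 * mu)) • dMat ξ - 1)) :
    0 < 1 - m ∧ q.PosDef ∧ q * q = -s ∧ q * z = 1 ∧ z * z = -r := by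
  have h₃ : 0 < lam + 3 * mu := by linarith
  have hc : 0 < 1 - m := by
    rw [hm, one_sub_lame_ratio hlam2mu.ne']
    positivity
  have hc_inv : (1 - m)⁻¹ = 1 + (lam + mu) / (lam + 3 * mu) := by
    rw [hm, inv_one_sub_lame_ratio hlam2mu.ne' h₃.ne']
  set κ := 2 * mu * √(ξ 0 ^ 2 + ξ 1 ^ 2)
  have hκ : 0 < κ := mul_pos (mul_pos two_pos hmu) (Real.sqrt_pos.2 (sq_add_sq_pos_of_ne_zero hξ))
  have hD := isStarProjection_dMat ξ
  have hq' : q = (√κ)⁻¹ • scaleRange (dMat ξ) √(1 - m) := by rw [hq, scaleRange]; module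
  have hz' : z = √κ • scaleRange (dMat ξ) (√(1 - m))⁻¹ := by rw [hz, scaleRange]; module
  have hs' : -s = κ⁻¹ • scaleRange (dMat ξ) (1 - m) := by rw [hs, scaleRange]; module
  have hr' : -r = κ • scaleRange (dMat ξ) (1 - m)⁻¹ := by rw [hr, hc_inv, scaleRange]; module
  have hmul := smul_scaleRange_mul_smul_scaleRange (R := ℝ) hD.isIdempotentElem
  have hsκ : 0 < √κ := Real.sqrt_pos.2 hκ
  have hsc : 0 < √(1 - m) := Real.sqrt_pos.2 hc
  refine ⟨hc, hq' ▸ (posDef_scaleRange hD hsc).smul (inv_pos.2 hsκ), ?_, ?_, ?_⟩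
  · rw [hq', hs', hmul, ← mul_inv, Real.mul_self_sqrt hκ.le, Real.mul_self_sqrt hc.le]
  · rw [hq', hz', hmul, inv_mul_cancel₀ hsκ.ne', mul_inv_cancel₀ hsc.ne', one_smul, scaleRange_one]
  · rw [hz', hr', hmul, ← mul_inv, Real.mul_self_sqrt hκ.le, Real.mul_self_sqrt hc.le]
end
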